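/- arXiv:2106.11433 — 4 statements merged into one kernel-verified Lean document; each statement's English description precedes it below -/
import Mathlib

section
/- Let f : (0,1) → (0,1) be a strictly increasing bijection, b₀ ∈ (0,1) a prior belief, τ ∈ {1,…,t}, and K₁,…,K_t real numbers. For every subset A ⊆ {1,…,t} let b(A) be the quasi-Bayesian belief after processing the signals in A. If b_ret ∈ (0,1) is the belief after a retraction of observation τ, i.e. the unique solution of ℓ(f⁻¹(b_ret)) = ℓ(f⁻¹(b({1,…,t}))) − K_τ, then b_ret = b({1,…,t} \ {τ}). In words: for any quasi-Bayesian updating rule with a fixed f, updating from a verifying retraction of observation τ yields exactly the belief the agent would hold had the retracted observation never been observed (Proposition 1, first part). -/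
/-!
In the coordinate `logit ∘ finv` signals act additively, so subtracting `K τ` from the sum over
`{1,…,t}` leaves the sum over `{1,…,t} \ {τ}`. Both beliefs therefore have the same coordinate,
and `logit ∘ finv` is injective on `(0,1)` (`logit_injOn_Ioo`, and `finv` has left inverse `f`).
-/

/-- Log-odds (logit) function `ℓ(p) = log (p / (1 - p))`. -/
noncomputable def logit (p : ℝ) : ℝ := Real.log (p / (1 - p))

/-- The logit is injective on `(0,1)`: there the odds are positive, so `Real.log` is injective
on them, and odds determine the probability. -/
lemma logit_injOn_Ioo : Set.InjOn logit (Set.Ioo 0 1) := by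
  rintro p ⟨hp0, hp1⟩ q ⟨hq0, hq1⟩ h
  have hp : 0 < 1 - p := by linarith
  have hq : 0 < 1 - q := by linarith
  have hodds : p / (1 - p) = q / (1 - q) :=
    Real.log_injOn_pos (Set.mem_Ioi.2 (div_pos hp0 hp)) (Set.mem_Ioi.2 (div_pos hq0 hq)) h
  rw [div_eq_div_iff hp.ne' hq.ne'] at hodds
  linarith

/-- **Proposition 1, first part.**
For any quasi-Bayesian updating rule with a fixed strictly increasing bijection
`f : (0,1) → (0,1)` (with inverse `finv`), prior `b₀ ∈ (0,1)` and log-likelihoods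
`K₁,…,K_t`, if `b A` denotes the quasi-Bayesian belief after processing the signals
in `A ⊆ {1,…,t}` (i.e. `ℓ(f⁻¹(b A)) = ℓ(f⁻¹(b₀)) + ∑_{j∈A} K j`), and `b_ret` is the
belief after a verifying retraction of observation `τ`
(i.e. `ℓ(f⁻¹(b_ret)) = ℓ(f⁻¹(b {1,…,t})) − K τ`), then
`b_ret = b ({1,…,t} \ {τ})`: the belief is exactly as if the retracted observation
had never been observed. -/
theorem retraction_equals_deletion_quasiBayesian
    (t : ℕ) (f finv : ℝ → ℝ)
    (hf_bij : Set.BijOn f (Set.Ioo 0 1) (Set.Ioo 0 1))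
    (hf_mono : StrictMonoOn f (Set.Ioo 0 1))
    (hinv : Set.InvOn finv f (Set.Ioo 0 1) (Set.Ioo 0 1))
    (hinv_maps : Set.MapsTo finv (Set.Ioo 0 1) (Set.Ioo 0 1))
    (b₀ : ℝ) (hb₀ : b₀ ∈ Set.Ioo (0:ℝ) 1)
    (τ : ℕ) (hτ : τ ∈ Finset.Icc 1 t)
    (K : ℕ → ℝ)
    (b : Finset ℕ → ℝ)
    (hb_mem : ∀ A ⊆ Finset.Icc 1 t, b A ∈ Set.Ioo (0:ℝ) 1)
    (hb : ∀ A ⊆ Finset.Icc 1 t,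
      logit (finv (b A)) = logit (finv b₀) + ∑ j ∈ A, K j)
    (b_ret : ℝ) (hret_mem : b_ret ∈ Set.Ioo (0:ℝ) 1)
    (hret : logit (finv b_ret) = logit (finv (b (Finset.Icc 1 t))) - K τ) :
    b_ret = b (Finset.Icc 1 t \ {τ}) := by
  have hsub : Finset.Icc 1 t \ {τ} ⊆ Finset.Icc 1 t := Finset.sdiff_subset
  have hmem := hb_mem _ hsub
  have hsum := Finset.sum_sdiff (f := K) (Finset.singleton_subset_iff.2 hτ)
  rw [Finset.sum_singleton] at hsum
  have hlogit : logit (finv b_ret) = logit (finv (b (Finset.Icc 1 t \ {τ}))) := by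
    rw [hret, hb _ subset_rfl, hb _ hsub]
    linarith
  exact hinv.2.injOn hret_mem hmem
    (logit_injOn_Ioo (hinv_maps hret_mem) (hinv_maps hmem) hlogit)
end

section
/- Compressed-history invariance: in the truth-or-noise model, the Bayesian posterior on the state depends on the history of observations only through the sum of the signals. Precisely, for realizations (σ₁,…,σ_t) ∈ {−1,1}^t and (σ'₁,…,σ'_{t'}) ∈ {−1,1}^{t'} (with possibly different lengths t and t', each model built with the same noise probability ν), if Σ_{j=1}^{t} σ_j = Σ_{k=1}^{t'} σ'_k then P(θ = 1 | s₁ = σ₁,…,s_t = σ_t) = P(θ = 1 | s₁ = σ'₁,…,s_{t'} = σ'_{t'}). -/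
/-!
Given `θ`, the observations are independent, and each equals a given sign with probability
`1 - ν / 2` if that sign is `θ` and `ν / 2` otherwise. Hence `P(θ = b, s = σ)` is a product
(`prob_state_obs`), and since every `σ j` is `±1`, the ratio of the two joint probabilities is
`P(θ = 1, s = σ) / P(θ = -1, s = σ) = ((1 - ν / 2) / (ν / 2)) ^ (∑ j, σ j)`
(`joint_true_eq`). The posterior is a function of this likelihood ratio alone, so it depends on
the history only through the sum of the signals (`condProb_eq`).
-/

open scoped BigOperators

/-- Sample space of the truth-or-noise model with `t` observations:
a state bit `θ` together with, for each period, a noise indicator bit `n_j`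
and a noise-value bit `ε_j`. -/
abbrev Omega (t : ℕ) := Bool × (Fin t → Bool × Bool)

/-- Encode a bit as a sign in `{-1, 1}`. -/
def toSign (x : Bool) : ℤ := if x then 1 else -1

/-- Atom weight of the product PMF realizing the truth-or-noise model:
`θ` is uniform on `{-1,1}`, the noise indicators `n_j` are i.i.d. Bernoulli(ν),
the noise values `ε_j` are i.i.d. uniform on `{-1,1}`, all mutually
independent. -/
noncomputable def weight {t : ℕ} (ν : ℝ) (ω : Omega t) : ℝ :=
  (1 / 2) * ∏ j : Fin t, ((if (ω.2 j).1 then ν else 1 - ν) * (1 / 2))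

/-- Probability of an event in the truth-or-noise model. -/
noncomputable def prob {t : ℕ} (ν : ℝ) (A : Set (Omega t)) : ℝ :=
  ∑ ω : Omega t, Set.indicator A (weight ν) ω

/-- Conditional probability `P(A | B)` in the truth-or-noise model. -/
noncomputable def condProb {t : ℕ} (ν : ℝ) (A B : Set (Omega t)) : ℝ :=
  prob ν (A ∩ B) / prob ν B

/-- The state `θ ∈ {-1, 1}`. -/
def stateVal {t : ℕ} (ω : Omega t) : ℤ := toSign ω.1

/-- The noise indicator `n_j` (`true` means observation `j` is noise). -/
def noiseVal {t : ℕ} (j : Fin t) (ω : Omega t) : Bool := (ω.2 j).1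

/-- The observation `s_j = (1 - n_j)·θ + n_j·ε_j ∈ {-1, 1}`. -/
def obsVal {t : ℕ} (j : Fin t) (ω : Omega t) : ℤ :=
  if (ω.2 j).1 then toSign (ω.2 j).2 else toSign ω.1

/-- The likelihood `P(s_j = x | θ = b)` of a single observation. -/
noncomputable def likelihood (ν : ℝ) (b : Bool) (x : ℤ) : ℝ :=
  if toSign b = x then 1 - ν / 2 else ν / 2

/-- Summing the per-period weights over the pairs `(n_j, ε_j)` compatible with the observation
`x` in state `b` gives the likelihood. -/
lemma sum_noise (ν : ℝ) (b : Bool) (x : ℤ) (hx : x = 1 ∨ x = -1) :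
    ∑ p : Bool × Bool, (if (if p.1 then toSign p.2 else toSign b) = x then
      (if p.1 then ν else 1 - ν) * (1 / 2) else 0) = likelihood ν b x := by
  rcases hx with rfl | rfl <;> cases b <;>
    simp [Fintype.sum_prod_type, likelihood, toSign] <;> ring

lemma prob_state_obs {t : ℕ} (ν : ℝ) (b : Bool) (σ : Fin t → ℤ)
    (hσ : ∀ j, σ j = 1 ∨ σ j = -1) :
    prob ν {ω : Omega t | ω.1 = b ∧ ∀ j, obsVal j ω = σ j}
      = 1 / 2 * ∏ j, likelihood ν b (σ j) := by
  classical
  have hw : ∀ f : Fin t → Bool × Bool,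
      Set.indicator {ω : Omega t | ω.1 = b ∧ ∀ j, obsVal j ω = σ j} (weight ν) (b, f)
        = 1 / 2 * ∏ j, (if (if (f j).1 then toSign (f j).2 else toSign b) = σ j then
            (if (f j).1 then ν else 1 - ν) * (1 / 2) else 0) := by
    intro f
    rw [Finset.prod_ite_zero]
    simp [Set.indicator_apply, weight, obsVal]
  have hz : ∀ f : Fin t → Bool × Bool,
      Set.indicator {ω : Omega t | ω.1 = b ∧ ∀ j, obsVal j ω = σ j} (weight ν) (!b, f) = 0 := by
    intro f
    simp
  have hb : ∀ g : Bool → ℝ, ∑ c, g c = g b + g (!b) := by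
    intro g
    cases b <;> simp [add_comm]
  rw [prob, Fintype.sum_prod_type, hb]
  simp only [hw, hz, Finset.sum_const_zero, add_zero]
  rw [← Finset.mul_sum, ← Fintype.prod_sum (fun j (p : Bool × Bool) =>
    if (if p.1 then toSign p.2 else toSign b) = σ j then
      (if p.1 then ν else 1 - ν) * (1 / 2) else 0)]
  simp only [sum_noise ν b _ (hσ _)]

lemma joint_true_eq {t : ℕ} (ν : ℝ) (hν : ν ∈ Set.Ioo (0:ℝ) 1) (σ : Fin t → ℤ)
    (hσ : ∀ j, σ j = 1 ∨ σ j = -1) :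
    ∏ j, likelihood ν true (σ j)
      = ((1 - ν / 2) / (ν / 2)) ^ (∑ j, σ j) * ∏ j, likelihood ν false (σ j) := by
  have h0 : 0 < ν / 2 := by linarith [hν.1]
  have h1 : 0 < 1 - ν / 2 := by linarith [hν.2]
  have hr : (1 - ν / 2) / (ν / 2) ≠ 0 := (div_pos h1 h0).ne'
  have hz : ∀ s : Finset (Fin t), ((1 - ν / 2) / (ν / 2)) ^ (∑ j ∈ s, σ j)
      = ∏ j ∈ s, ((1 - ν / 2) / (ν / 2)) ^ σ j := by
    intro s
    induction s using Finset.cons_induction with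
    | empty => simp
    | cons a s ha ih => rw [Finset.sum_cons, Finset.prod_cons, zpow_add₀ hr, ih]
  rw [hz, ← Finset.prod_mul_distrib]
  refine Finset.prod_congr rfl fun j _ => ?_
  rcases hσ j with h | h <;> rw [h]
  · simp only [likelihood, toSign, if_true, zpow_one]
    norm_num
    field_simp [hν.1.ne']
  · simp only [likelihood, toSign, zpow_neg_one, inv_div]
    norm_num
    exact (div_mul_cancel₀ _ h1.ne').symm

/-- The posterior as a function of the likelihood ratio, hence of the sum of the signals. -/
lemma condProb_eq {t : ℕ} (ν : ℝ) (hν : ν ∈ Set.Ioo (0:ℝ) 1) (σ : Fin t → ℤ)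
    (hσ : ∀ j, σ j = 1 ∨ σ j = -1) :
    condProb ν {ω : Omega t | stateVal ω = 1} {ω : Omega t | ∀ j, obsVal j ω = σ j}
      = ((1 - ν / 2) / (ν / 2)) ^ (∑ j, σ j)
        / (((1 - ν / 2) / (ν / 2)) ^ (∑ j, σ j) + 1) := by
  classical
  have hA : {ω : Omega t | stateVal ω = 1} ∩ {ω : Omega t | ∀ j, obsVal j ω = σ j}
      = {ω : Omega t | ω.1 = true ∧ ∀ j, obsVal j ω = σ j} := by
    ext ⟨b, f⟩
    cases b <;> simp [stateVal, toSign]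
  have hB : prob ν {ω : Omega t | ∀ j, obsVal j ω = σ j}
      = prob ν {ω : Omega t | ω.1 = true ∧ ∀ j, obsVal j ω = σ j}
        + prob ν {ω : Omega t | ω.1 = false ∧ ∀ j, obsVal j ω = σ j} := by
    simp only [prob]
    rw [← Finset.sum_add_distrib]
    refine Finset.sum_congr rfl ?_
    rintro ⟨b, f⟩ -
    cases b <;> simp [Set.indicator_apply]
  have hpos : 0 < ∏ j, likelihood ν false (σ j) := by
    refine Finset.prod_pos fun j _ => ?_
    unfold likelihood
    split_ifs <;> linarith [hν.1, hν.2]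
  rw [condProb, hA, hB, prob_state_obs ν true σ hσ, prob_state_obs ν false σ hσ,
    joint_true_eq ν hν σ hσ]
  generalize ((1 - ν / 2) / (ν / 2)) ^ (∑ j, σ j) = r
  rw [← mul_div_mul_right r (r + 1) (c := 1 / 2 * ∏ j, likelihood ν false (σ j)) (by positivity)]
  congr 1 <;> ring

/-- **Compressed-history invariance.** In the truth-or-noise model, the Bayesian
posterior on the state depends on the history of observations only through the
sum of the signals: for realizations `(σ₁,…,σ_t) ∈ {−1,1}^t` and
`(σ'₁,…,σ'_{t'}) ∈ {−1,1}^{t'}` (possibly of different lengths, with the same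
noise probability `ν`), if `∑ σ_j = ∑ σ'_k` then the posteriors
`P(θ = 1 | history)` coincide. -/
theorem compressed_history_invariance
    (t t' : ℕ) (ν : ℝ) (hν : ν ∈ Set.Ioo (0:ℝ) 1)
    (σ : Fin t → ℤ) (hσ : ∀ j, σ j = 1 ∨ σ j = -1)
    (σ' : Fin t' → ℤ) (hσ' : ∀ k, σ' k = 1 ∨ σ' k = -1)
    (hsum : ∑ j : Fin t, σ j = ∑ k : Fin t', σ' k) :
    condProb ν {ω : Omega t | stateVal ω = 1}
        {ω : Omega t | ∀ j : Fin t, obsVal j ω = σ j}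
      = condProb ν {ω : Omega t' | stateVal ω = 1}
          {ω : Omega t' | ∀ k : Fin t', obsVal k ω = σ' k} := by
  rw [condProb_eq ν hν σ hσ, condProb_eq ν hν σ' hσ', hsum]
end

section
/- Verifying retractions are equivalent to deletion for a Bayesian: in the truth-or-noise model, for every realization (σ₁,…,σ_t) ∈ {−1,1}^t and every τ ∈ {1,…,t}, P(θ = 1 | s₁ = σ₁,…,s_t = σ_t, n_τ = 1) = P(θ = 1 | s_j = σ_j for all j ≠ τ). That is, conditioning additionally on the event that observation τ was noise yields exactly the posterior computed from the history with the retracted observation removed. -/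
/-!
The pair `(n_τ, ε_τ)` is independent of every event that does not involve coordinate `τ`. Given
`n_τ = 1`, the observation `s_τ` is `ε_τ`, so conditioning on the whole history and on `n_τ = 1` means
conditioning on the history without `τ` and on `(n_τ, ε_τ) = (1, σ_τ)`. By independence
(`prob_inter_coord_noise`) the latter multiplies numerator and denominator of the posterior by the
same factor `ν / 2 > 0`, which cancels.
-/

open scoped BigOperators

/-- Fubini for the sample space: the coordinate `τ` is summed separately from the others. -/
lemma prob_eq_sum_insertNth {k : ℕ} (ν : ℝ) (τ : Fin (k + 1)) (A : Set (Omega (k + 1))) :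
    prob ν A = ∑ b : Bool, ∑ p : Bool × Bool, ∑ g : Fin k → Bool × Bool,
      A.indicator (weight ν) (b, τ.insertNth p g) := by
  unfold prob
  rw [Fintype.sum_prod_type]
  refine Finset.sum_congr rfl fun b _ => ?_
  rw [← Fintype.sum_prod_type']
  exact (Equiv.sum_comp (Fin.insertNthEquiv (fun _ => Bool × Bool) τ)
    fun f => A.indicator (weight ν) (b, f)).symm

lemma weight_insertNth {k : ℕ} (ν : ℝ) (τ : Fin (k + 1)) (b : Bool) (p : Bool × Bool)
    (g : Fin k → Bool × Bool) :
    weight ν ((b, τ.insertNth p g) : Omega (k + 1))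
      = ((if p.1 then ν else 1 - ν) * (1 / 2)) * weight ν ((b, g) : Omega k) := by
  simp only [weight, Fin.prod_univ_succAbove _ τ, Fin.insertNth_apply_same,
    Fin.insertNth_apply_succAbove]
  ring

/-- An event `A` that does not involve coordinate `τ` is independent of `(n_τ, ε_τ) = (1, e)`, which
has probability `ν / 2`. -/
lemma prob_inter_coord_noise {k : ℕ} (ν : ℝ) (τ : Fin (k + 1)) (e : Bool)
    (A : Set (Omega (k + 1)))
    (hA : ∀ b p q g, ((b, τ.insertNth p g) : Omega (k + 1)) ∈ A → (b, τ.insertNth q g) ∈ A) :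
    prob ν (A ∩ {ω | ω.2 τ = (true, e)}) = ν / 2 * prob ν A := by
  classical
  rw [prob_eq_sum_insertNth ν τ, prob_eq_sum_insertNth ν τ, Finset.mul_sum]
  refine Finset.sum_congr rfl fun b _ => ?_
  rw [Finset.sum_comm, Finset.sum_comm (s := (Finset.univ : Finset (Bool × Bool))),
    Finset.mul_sum]
  refine Finset.sum_congr rfl fun g _ => ?_
  have hiff : ∀ p, ((b, τ.insertNth p g) : Omega (k + 1)) ∈ A ↔
      ((b, τ.insertNth (true, e) g) : Omega (k + 1)) ∈ A :=
    fun p => ⟨hA b _ _ g, hA b _ _ g⟩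
  simp only [Set.indicator_apply, Set.mem_inter_iff, Set.mem_ofPred_eq, Fin.insertNth_apply_same,
    hiff, weight_insertNth]
  by_cases h : ((b, τ.insertNth (true, e) g) : Omega (k + 1)) ∈ A
  · simp only [h, true_and, if_true, Finset.sum_ite_eq', Finset.mem_univ]
    simp only [Fintype.sum_prod_type, Fintype.sum_bool]
    simp
    ring
  · simp [h]

/-- **Verifying retractions are equivalent to deletion for a Bayesian.** In the
truth-or-noise model, for every realization `(σ₁,…,σ_t) ∈ {−1,1}^t` and every
`τ ∈ {1,…,t}`,
`P(θ = 1 | s₁ = σ₁,…,s_t = σ_t, n_τ = 1) = P(θ = 1 | s_j = σ_j for all j ≠ τ)`: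
conditioning additionally on observation `τ` being noise yields exactly the
posterior computed from the history with the retracted observation removed. -/
theorem retraction_equals_deletion_bayesian
    (t : ℕ) (ν : ℝ) (hν : ν ∈ Set.Ioo (0:ℝ) 1)
    (σ : Fin t → ℤ) (hσ : ∀ j, σ j = 1 ∨ σ j = -1) (τ : Fin t) :
    condProb ν {ω : Omega t | stateVal ω = 1}
        ({ω : Omega t | ∀ j : Fin t, obsVal j ω = σ j}
          ∩ {ω : Omega t | noiseVal τ ω = true})
      = condProb ν {ω : Omega t | stateVal ω = 1}
          {ω : Omega t | ∀ j : Fin t, j ≠ τ → obsVal j ω = σ j} := by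
  obtain _ | k := t
  · exact τ.elim0
  obtain ⟨e, he⟩ : ∃ e : Bool, toSign e = σ τ := by
    rcases hσ τ with h | h
    · exact ⟨true, by simp [toSign, h]⟩
    · exact ⟨false, by simp [toSign, h]⟩
  have hinj : ∀ x : Bool, toSign x = σ τ ↔ x = e := by
    intro x
    rw [← he]
    cases x <;> cases e <;> simp [toSign]
  set D : Set (Omega (k + 1)) := {ω | ∀ j, j ≠ τ → obsVal j ω = σ j} with hD
  have hB : {ω : Omega (k + 1) | ∀ j, obsVal j ω = σ j} ∩ {ω | noiseVal τ ω = true}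
      = D ∩ {ω | ω.2 τ = (true, e)} := by
    ext ω
    simp only [hD, Set.mem_inter_iff, Set.mem_ofPred_eq, noiseVal, Prod.ext_iff]
    constructor
    · rintro ⟨h, hn⟩
      refine ⟨fun j _ => h j, hn, ?_⟩
      have := h τ
      rwa [obsVal, if_pos hn, hinj] at this
    · rintro ⟨h, hn, hx⟩
      refine ⟨fun j => ?_, hn⟩
      by_cases hj : j = τ
      · subst hj
        rwa [obsVal, if_pos hn, hinj]
      · exact h j hj
  have hDinv : ∀ b p q g, ((b, τ.insertNth p g) : Omega (k + 1)) ∈ D →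
      (b, τ.insertNth q g) ∈ D := by
    intro b p q g h j hj
    have := h j hj
    obtain ⟨i, rfl⟩ := Fin.exists_succAbove_eq hj
    simpa [obsVal] using this
  have hν2 : ν / 2 ≠ 0 := (half_pos hν.1).ne'
  rw [hB, condProb, condProb, ← Set.inter_assoc, prob_inter_coord_noise ν τ e D hDinv,
    prob_inter_coord_noise ν τ e ({ω | stateVal ω = 1} ∩ D) fun b p q g h => ⟨h.1, hDinv b p q g h.2⟩,
    mul_div_mul_left _ _ hν2]
end

section
/- A verifying retraction is equivalent to an opposite new observation for a Bayesian: in the truth-or-noise model with t+1 potential observations, for every realization (σ₁,…,σ_t) ∈ {−1,1}^t and every τ ∈ {1,…,t}, P(θ = 1 | s₁ = σ₁,…,s_t = σ_t, n_τ = 1) = P(θ = 1 | s₁ = σ₁,…,s_t = σ_t, s_{t+1} = −σ_τ). That is, retracting observation τ moves the Bayesian posterior exactly as would drawing one additional observation of the opposite color. -/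
/-!
Conditionally on `θ`, the pairs `(n_j, ε_j)` are independent, so the probability of an event that
constrains `θ` and each pair separately is a sum over `θ` of products of one-period masses
(`prob_rectangle`). The two conditioning events differ only in the factors of periods `τ` and `t+1`:

* retraction: `P(s_τ = σ_τ, n_τ = 1 | θ) * 1 = ν / 2`, whatever `θ` is;
* new observation: `P(s_τ = σ_τ | θ) * P(s_{t+1} = -σ_τ | θ) = (1 - ν / 2) * (ν / 2)`, whatever `θ`
  is, because exactly one of the two opposite observations agrees with `θ`.

Hence the second event has `1 - ν / 2` times the probability of the first one, jointly with any
event about `θ` (`prob_new_observation`), and this nonzero constant cancels in the posterior.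
-/

open scoped BigOperators

/-- Mass of one noise pair `(n, ε)`. -/
noncomputable def pairWeight (ν : ℝ) (x : Bool × Bool) : ℝ :=
  (if x.1 then ν else 1 - ν) * (1 / 2)

/-- Probability that one noise pair `(n, ε)` lies in `E`. -/
noncomputable def pairProb (ν : ℝ) (E : Set (Bool × Bool)) : ℝ :=
  ∑ x : Bool × Bool, E.indicator (pairWeight ν) x

/-- Noise pairs that produce the observation `v` when the state bit is `b`. -/
def obsSet (b : Bool) (v : ℤ) : Set (Bool × Bool) :=
  {x | (if x.1 then toSign x.2 else toSign b) = v}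

/-- Conditional independence given the state: rectangles factor for each value of `θ`. -/
lemma prob_rectangle {n : ℕ} (ν : ℝ) (S : Set Bool) (F : Bool → Fin n → Set (Bool × Bool)) :
    prob ν {ω : Omega n | ω.1 ∈ S ∧ ∀ j, ω.2 j ∈ F ω.1 j}
      = ∑ b : Bool, S.indicator (fun b => (1 / 2) * ∏ j, pairProb ν (F b j)) b := by
  classical
  unfold prob
  rw [Fintype.sum_prod_type]
  refine Finset.sum_congr rfl fun b _ => ?_
  by_cases hb : b ∈ S
  · rw [Set.indicator_of_mem hb]
    simp only [pairProb]
    rw [Finset.prod_univ_sum, Fintype.piFinset_univ, Finset.mul_sum]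
    refine Finset.sum_congr rfl fun f _ => ?_
    by_cases hf : ∀ j, f j ∈ F b j
    · rw [Set.indicator_of_mem (show (b, f) ∈ {ω : Omega n | ω.1 ∈ S ∧ ∀ j, ω.2 j ∈ F ω.1 j}
        from ⟨hb, hf⟩)]
      simp only [Set.indicator_of_mem (hf _)]
      rfl
    · rw [Set.indicator_of_notMem (fun h : (b, f) ∈ _ => hf h.2)]
      push Not at hf
      obtain ⟨j, hj⟩ := hf
      rw [Finset.prod_eq_zero (Finset.mem_univ j) (Set.indicator_of_notMem hj _), mul_zero]
  · rw [Set.indicator_of_notMem hb]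
    exact Finset.sum_eq_zero fun f _ => Set.indicator_of_notMem (fun h : (b, f) ∈ _ => hb h.1) _

lemma pairProb_univ (ν : ℝ) : pairProb ν Set.univ = 1 := by
  simp [pairProb, pairWeight, Fintype.sum_prod_type]
  ring

/-- A noisy observation equal to `v` has probability `ν / 2` in either state. -/
lemma pairProb_retracted (ν : ℝ) (b : Bool) {v : ℤ} (hv : v = 1 ∨ v = -1) :
    pairProb ν (obsSet b v ∩ {x | x.1 = true}) = ν / 2 := by
  rcases hv with rfl | rfl <;> cases b <;>
    simp [pairProb, pairWeight, obsSet, toSign, Fintype.sum_prod_type, Set.indicator_apply] <;> ring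

/-- Two opposite observations have the same joint likelihood in either state. -/
lemma pairProb_opposite (ν : ℝ) (b : Bool) {v : ℤ} (hv : v = 1 ∨ v = -1) :
    pairProb ν (obsSet b v) * pairProb ν (obsSet b (-v)) = (1 - ν / 2) * (ν / 2) := by
  rcases hv with rfl | rfl <;> cases b <;>
    simp [pairProb, pairWeight, obsSet, toSign, Fintype.sum_prod_type, Set.indicator_apply] <;> ring

lemma prob_new_observation {t : ℕ} (ν : ℝ) (σ : Fin t → ℤ) (hσ : ∀ j, σ j = 1 ∨ σ j = -1)
    (τ : Fin t) (S : Set Bool) :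
    prob ν ({ω : Omega (t + 1) | ω.1 ∈ S} ∩
        ({ω : Omega (t + 1) | ∀ j : Fin t, obsVal j.castSucc ω = σ j}
          ∩ {ω : Omega (t + 1) | obsVal (Fin.last t) ω = -σ τ}))
      = (1 - ν / 2) * prob ν ({ω : Omega (t + 1) | ω.1 ∈ S} ∩
        ({ω : Omega (t + 1) | ∀ j : Fin t, obsVal j.castSucc ω = σ j}
          ∩ {ω : Omega (t + 1) | noiseVal τ.castSucc ω = true})) := by
  classical
  -- Per-period constraints for the two events; the retraction leaves period `t+1` free.
  let F : Bool → Fin (t + 1) → Set (Bool × Bool) := fun b =>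
    Fin.lastCases (obsSet b (-σ τ)) (fun j => obsSet b (σ j))
  let G : Bool → Fin (t + 1) → Set (Bool × Bool) := fun b =>
    Fin.lastCases Set.univ
      (fun j => if j = τ then obsSet b (σ j) ∩ {x | x.1 = true} else obsSet b (σ j))
  have hF : ({ω : Omega (t + 1) | ω.1 ∈ S} ∩
        ({ω : Omega (t + 1) | ∀ j : Fin t, obsVal j.castSucc ω = σ j}
          ∩ {ω : Omega (t + 1) | obsVal (Fin.last t) ω = -σ τ}))
      = {ω : Omega (t + 1) | ω.1 ∈ S ∧ ∀ j, ω.2 j ∈ F ω.1 j} := by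
    ext ω
    simp [F, Fin.forall_fin_succ', obsSet, obsVal]
  have hG : ({ω : Omega (t + 1) | ω.1 ∈ S} ∩
        ({ω : Omega (t + 1) | ∀ j : Fin t, obsVal j.castSucc ω = σ j}
          ∩ {ω : Omega (t + 1) | noiseVal τ.castSucc ω = true}))
      = {ω : Omega (t + 1) | ω.1 ∈ S ∧ ∀ j, ω.2 j ∈ G ω.1 j} := by
    ext ω
    have key : ∀ j : Fin t, (ω.2 j.castSucc ∈ (if j = τ then
        obsSet ω.1 (σ j) ∩ {x | x.1 = true} else obsSet ω.1 (σ j))) ↔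
        (obsVal j.castSucc ω = σ j ∧ (j = τ → noiseVal τ.castSucc ω = true)) := by
      intro j
      by_cases h : j = τ
      · subst h
        simp [obsSet, obsVal, noiseVal]
      · simp [h, obsSet, obsVal]
    simp only [G, Fin.forall_fin_succ', Fin.lastCases_castSucc, Fin.lastCases_last, Set.mem_univ,
      and_true, Set.mem_inter_iff, Set.mem_ofPred_eq, key, forall_and, forall_eq]
  rw [hF, hG, prob_rectangle, prob_rectangle, Finset.mul_sum]
  refine Finset.sum_congr rfl fun b _ => ?_
  by_cases hb : b ∈ S
  swap
  · simp [hb]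
  simp only [Set.indicator_of_mem hb, Fin.prod_univ_castSucc, F, G, Fin.lastCases_castSucc,
    Fin.lastCases_last, pairProb_univ]
  rw [← Finset.mul_prod_erase _ _ (Finset.mem_univ τ),
    ← Finset.mul_prod_erase _ (fun j => pairProb ν (if j = τ then _ else _)) (Finset.mem_univ τ)]
  have hrest : ∏ j ∈ Finset.univ.erase τ, pairProb ν (if j = τ then
        obsSet b (σ j) ∩ {x | x.1 = true} else obsSet b (σ j))
      = ∏ j ∈ Finset.univ.erase τ, pairProb ν (obsSet b (σ j)) :=
    Finset.prod_congr rfl fun j hj => by rw [if_neg (Finset.ne_of_mem_erase hj)]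
  rw [hrest, if_pos rfl, pairProb_retracted ν b (hσ τ)]
  linear_combination (1 / 2) * (∏ j ∈ Finset.univ.erase τ, pairProb ν (obsSet b (σ j))) *
    pairProb_opposite ν b (hσ τ)

/-- **A verifying retraction is equivalent to an opposite new observation for a
Bayesian.** In the truth-or-noise model with `t+1` potential observations, for
every realization `(σ₁,…,σ_t) ∈ {−1,1}^t` and every `τ ∈ {1,…,t}`,
`P(θ = 1 | s₁ = σ₁,…,s_t = σ_t, n_τ = 1)
  = P(θ = 1 | s₁ = σ₁,…,s_t = σ_t, s_{t+1} = −σ_τ)`: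
retracting observation `τ` moves the Bayesian posterior exactly as would
drawing one additional observation of the opposite color. -/
theorem retraction_equals_opposite_new_observation
    (t : ℕ) (ν : ℝ) (hν : ν ∈ Set.Ioo (0:ℝ) 1)
    (σ : Fin t → ℤ) (hσ : ∀ j, σ j = 1 ∨ σ j = -1) (τ : Fin t) :
    condProb ν {ω : Omega (t + 1) | stateVal ω = 1}
        ({ω : Omega (t + 1) | ∀ j : Fin t, obsVal j.castSucc ω = σ j}
          ∩ {ω : Omega (t + 1) | noiseVal τ.castSucc ω = true})
      = condProb ν {ω : Omega (t + 1) | stateVal ω = 1}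
          ({ω : Omega (t + 1) | ∀ j : Fin t, obsVal j.castSucc ω = σ j}
            ∩ {ω : Omega (t + 1) | obsVal (Fin.last t) ω = -σ τ}) := by
  have hstate : {ω : Omega (t + 1) | stateVal ω = 1}
      = {ω : Omega (t + 1) | ω.1 ∈ ({true} : Set Bool)} := by
    ext ω
    cases h : ω.1 <;> simp [stateVal, toSign, h]
  have hc : (1 - ν / 2) ≠ 0 := ne_of_gt (by linarith [hν.2])
  have hnum := prob_new_observation ν σ hσ τ {true}
  have hden := prob_new_observation ν σ hσ τ Set.univ
  simp only [Set.mem_univ, Set.ofPred_true, Set.univ_inter] at hden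
  unfold condProb
  rw [hstate, hnum, hden, mul_div_mul_left _ _ hc]
end
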